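/- arXiv:2107.14022 — 2 statements merged into one kernel-verified Lean document; each statement's English description precedes it below -/
import Mathlib

section
/- Let α = 27195/9091 and γ = 11699/6806. Assume (C_w)_{w∈Λ} are nonnegative real numbers such that for every v ∈ Λ, C_v ≤ 11699, either C_v = 0 or C_v ≥ 6806, and α·C_v ≤ min_{a ∈ (A∪{ε})\{l(v)}} Σ_{b∈A, vab ∈ S^{≤p}_free} C_{Λ(vab)}. Fix any Ben strategy φ for the hard game over A, and let S_n and the weights Ŝ_n be defined from φ and (C_w) as in the context. Let β > 1 be a real number such that α − γ·β^{1−p}(β^{3+p/2} + 2β^{2+p/2} + β^{1+p/2} − β² − 1)/((1+β)(β−1)²) ≥ β. Then for all n ≥ 1, Ŝ_{n+1} ≥ β·Ŝ_n. -/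
open scoped Classical

/-- `w` contains a factor that is a square of period between `lo` and `hi`. -/
def HasSq {A : Type*} (lo hi : ℕ) (w : List A) : Prop :=
  ∃ u : List A, lo ≤ u.length ∧ u.length ≤ hi ∧ (u ++ u) <:+: w

/-- `w` is a square of period between `lo` and `hi`. -/
def IsSq {A : Type*} (lo hi : ℕ) (w : List A) : Prop :=
  ∃ u : List A, lo ≤ u.length ∧ u.length ≤ hi ∧ w = u ++ u

/-- `w` is a minimal square of period between `lo` and `hi`: it is such a square and no
proper factor of it is such a square. -/
def MinSq {A : Type*} (lo hi : ℕ) (w : List A) : Prop :=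
  IsSq lo hi w ∧ ∀ f : List A, f <:+: w → f ≠ w → ¬ IsSq lo hi f

/-- A word is normalized if it is lexicographically least among its images under
permutations of the alphabet. -/
def Normalized {A : Type*} [LinearOrder A] (w : List A) : Prop :=
  ∀ π : Equiv.Perm A, ¬ List.Lex (· < ·) (w.map π) w

/-- `Λ`: the set of normalized words that are proper prefixes of minimal squares of
period between `lo` and `hi`. -/
def Lam {A : Type*} [LinearOrder A] (lo hi : ℕ) : Set (List A) :=
  {w | Normalized w ∧ ∃ s : List A, MinSq lo hi s ∧ w <+: s ∧ w ≠ s}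

/-- `Λ(w)`: the longest element of `Λ` that is, up to a permutation of the alphabet,
a suffix of `w`. -/
noncomputable def lamOf {A : Type*} [LinearOrder A] (lo hi : ℕ) (w : List A) : List A :=
  if h : ∃ v : List A,
      (v ∈ Lam lo hi ∧ ∃ π : Equiv.Perm A, v.map π <:+ w) ∧
      ∀ v' : List A, (v' ∈ Lam lo hi ∧ ∃ π : Equiv.Perm A, v'.map π <:+ w) →
        v'.length ≤ v.length
  then h.choose else []

/-- A `2⁻`-power: a word of length at least 3 that becomes a square after appending
a suitable letter. -/
def TwoMinusPower {A : Type*} (v : List A) : Prop :=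
  3 ≤ v.length ∧ ∃ a : A, ∃ u : List A, u ≠ [] ∧ v ++ [a] = u ++ u

/-- `w` ends with a `2⁻`-power. -/
def EndsWithTMP {A : Type*} (w : List A) : Prop :=
  ∃ v : List A, v <:+ w ∧ TwoMinusPower v

/-- The conditions required of every word obtained just after one of Ann's moves in
the hard game over `Fin 6`: it is square-free, its weight `C_{Λ(u)}` (with `p = 8`)
is positive, and it does not end with a `2⁻`-power. -/
def GoodH (C : List (Fin 6) → ℝ) (u : List (Fin 6)) : Prop :=
  (∀ x : List (Fin 6), x ≠ [] → ¬ (x ++ x) <:+: u) ∧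
  0 < C (lamOf 1 8 u) ∧ ¬ EndsWithTMP u

/-- `PlayableH φ C n v` : `v` is playable after Ann's `n`-th move in the hard game over
`Fin 6` against Ben's strategy `φ` (where `φ w = none` means Ben skips his turn): there
is a sequence of `n` Ann moves, against Ben playing `φ`, producing `v` just after Ann's
`n`-th move, all of whose intermediate words after Ann's moves satisfy `GoodH`. -/
inductive PlayableH (φ : List (Fin 6) → Option (Fin 6)) (C : List (Fin 6) → ℝ) :
    ℕ → List (Fin 6) → Prop
  | base (a : Fin 6) : GoodH C [a] → PlayableH φ C 1 [a]
  | step {n : ℕ} {v : List (Fin 6)} (a : Fin 6) :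
      PlayableH φ C n v → GoodH C (v ++ (φ v).toList ++ [a]) →
      PlayableH φ C (n + 1) (v ++ (φ v).toList ++ [a])

/-- `Ŝ_n = Σ_{w ∈ Λ} C_w · |{u ∈ S_n : Λ(u) = w}| = Σ_{v ∈ S_n} C_{Λ(v)}`, where `S_n`
is the set of words playable after Ann's `n`-th move. -/
noncomputable def ShatH (φ : List (Fin 6) → Option (Fin 6)) (C : List (Fin 6) → ℝ)
    (n : ℕ) : ℝ :=
  ∑ᶠ v ∈ {v : List (Fin 6) | PlayableH φ C n v}, C (lamOf 1 8 v)

/-!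
By the inequality at `Λ(v)`, the words `v φ(v) b` without squares of period at most `p`, for
`v ∈ S_n`, together weigh at least `α` times as much as `S_n`. Those that fail to be in `S_{n+1}`
have a long square or a `2⁻`-power at the end. In both cases they end with some `t c t`, and
`i = |t| ≥ p`: the square, having period above `p`, still gives `t c t` when its first letter is
dropped, and a shorter `t c t` would let Ben complete a short square, so that the inequality forces
the coefficient to vanish. Such an ending determines the last `i` letters from the preceding ones,
hence the word from its ancestor `⌊i / 2⌋` rounds earlier, so at most `|S_{n+1-⌊i/2⌋}|` words are
lost for each `i`. Since the nonzero coefficients have ratio at most `γ`, the lost weight is at most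
`γ` times the sum of the weights of the `S_{n+1-⌊i/2⌋}`, which by induction is dominated by a
geometric series in `1 / β`.
-/

section Words

variable {A : Type*} {lo hi : ℕ}

lemma suffix_append_iff {u v w : List A} :
    u <:+ v ++ w ↔ u <:+ w ∨ ∃ s, u = s ++ w ∧ s <:+ v := by
  constructor
  · intro h
    rcases List.suffix_or_suffix_of_suffix h (List.suffix_append v w) with hu | ⟨s, rfl⟩
    · exact .inl hu
    · exact .inr ⟨s, rfl, List.suffix_append_self_iff.mp h⟩
  · rintro (hu | ⟨s, rfl, hs⟩)
    · exact hu.trans (List.suffix_append v w)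
    · exact List.suffix_append_self_iff.mpr hs

lemma getLast?_eq_of_suffix {u v : List A} (h : u <:+ v) (hu : u ≠ []) :
    u.getLast? = v.getLast? := by
  obtain ⟨r, rfl⟩ := h
  rw [List.getLast?_append_of_ne_nil _ hu]

lemma map_inv_map (π : Equiv.Perm A) (w : List A) : (w.map π).map ⇑π⁻¹ = w := by
  simp [List.map_map, Function.comp_def]

lemma IsSq.map {w : List A} (h : IsSq lo hi w) (π : Equiv.Perm A) : IsSq lo hi (w.map π) := by
  obtain ⟨u, hlo, hhi, rfl⟩ := h
  exact ⟨u.map π, by simpa using hlo, by simpa using hhi, by simp⟩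

lemma HasSq.map {w : List A} (h : HasSq lo hi w) (π : Equiv.Perm A) :
    HasSq lo hi (w.map π) := by
  obtain ⟨u, hlo, hhi, hu⟩ := h
  exact ⟨u.map π, by simpa using hlo, by simpa using hhi, by simpa using hu.map π⟩

lemma hasSq_map_iff (π : Equiv.Perm A) {w : List A} :
    HasSq lo hi (w.map π) ↔ HasSq lo hi w :=
  ⟨fun h => map_inv_map π w ▸ h.map π⁻¹, fun h => h.map π⟩

lemma HasSq.mono {v w : List A} (h : HasSq lo hi v) (hvw : v <:+: w) : HasSq lo hi w := by
  obtain ⟨u, hlo, hhi, hu⟩ := h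
  exact ⟨u, hlo, hhi, hu.trans hvw⟩

lemma MinSq.map {s : List A} (h : MinSq lo hi s) (π : Equiv.Perm A) :
    MinSq lo hi (s.map π) := by
  refine ⟨h.1.map π, fun f hf hne hsq => h.2 (f.map ⇑π⁻¹) ?_ ?_ (hsq.map π⁻¹)⟩
  · simpa only [map_inv_map] using hf.map ⇑π⁻¹
  · rintro rfl
    exact hne (by simpa only [inv_inv] using (map_inv_map π⁻¹ f).symm)

lemma hasSq_iff_exists_minSq {w : List A} :
    HasSq lo hi w ↔ ∃ s, MinSq lo hi s ∧ s <:+: w := by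
  constructor
  · rintro ⟨u, hlo, hhi, hu⟩
    obtain ⟨s, ⟨hs, hsw⟩, hmin⟩ := exists_minimalFor_of_wellFoundedLT
      (fun s : List A => IsSq lo hi s ∧ s <:+: w) List.length ⟨_, ⟨u, hlo, hhi, rfl⟩, hu⟩
    refine ⟨s, ⟨hs, fun f hf hne hsq => hne ?_⟩, hsw⟩
    exact hf.sublist.eq_of_length_le (hmin ⟨hsq, hf.trans hsw⟩ hf.length_le)
  · rintro ⟨_, ⟨⟨u, hlo, hhi, rfl⟩, -⟩, hu⟩
    exact ⟨u, hlo, hhi, hu⟩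

/-- A word none of whose factors is a square, of whatever period. -/
def SquareFreeWord (w : List A) : Prop :=
  ∀ x : List A, x ≠ [] → ¬ (x ++ x) <:+: w

lemma SquareFreeWord.not_hasSq {w : List A} (h : SquareFreeWord w) (hlo : 0 < lo) :
    ¬ HasSq lo hi w := by
  rintro ⟨x, hx, -, hxw⟩
  exact h x (List.ne_nil_of_length_pos (hlo.trans_le hx)) hxw

lemma squareFreeWord_concat_iff {v : List A} {c : A} :
    SquareFreeWord (v ++ [c]) ↔ SquareFreeWord v ∧ ∀ t : List A, ¬ t ++ c :: t <:+ v := by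
  constructor
  · refine fun h => ⟨fun x hx hxv => h x hx (hxv.trans (List.prefix_append _ _).isInfix),
      fun t ht => h (t ++ [c]) (by simp) ?_⟩
    simpa using (List.suffix_append_self_iff (l₃ := [c]).mpr ht).isInfix
  · rintro ⟨hv, ht⟩ x hx hxv
    rcases List.infix_concat_iff.mp hxv with hsuf | hinf
    · obtain ⟨t, d, rfl⟩ := List.eq_nil_or_concat x |>.resolve_left hx
      have hsuf' : (t ++ d :: t) ++ [d] <:+ v ++ [c] := by simpa using hsuf
      obtain ⟨htv, hdc⟩ :=
        (List.suffix_append_inj_of_length_eq (s₁ := [d]) (s₂ := [c]) rfl).mp hsuf'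
      obtain rfl : d = c := by simpa using hdc
      exact ht t htv
    · exact hv x hx hinf

lemma twoMinusPower_iff {y : List A} :
    TwoMinusPower y ↔ ∃ t c, t ≠ [] ∧ y = t ++ c :: t := by
  constructor
  · rintro ⟨hlen, a, u, hu, hyu⟩
    obtain ⟨t, c, rfl⟩ := List.eq_nil_or_concat u |>.resolve_left hu
    have hy : y = t ++ c :: t := by
      have : y ++ [a] = (t ++ c :: t) ++ [c] := by simpa using hyu
      exact (List.append_inj' this rfl).1
    refine ⟨t, c, ?_, hy⟩
    rintro rfl
    simp [hy] at hlen
  · rintro ⟨t, c, ht, rfl⟩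
    have := List.length_pos_of_ne_nil ht
    exact ⟨by simp; omega, c, t ++ [c], by simp, by simp⟩

lemma endsWithTMP_iff {w : List A} :
    EndsWithTMP w ↔ ∃ t c, t ≠ [] ∧ t ++ c :: t <:+ w := by
  simp only [EndsWithTMP, twoMinusPower_iff]
  grind

/-- Ben's reply creates no square, since after Ann's move the word had no `2⁻`-power suffix. -/
lemma SquareFreeWord.append_toList {v : List A} {a : Option A} (hv : SquareFreeWord v)
    (htmp : ¬ EndsWithTMP v) (ha : a ≠ v.getLast?) : SquareFreeWord (v ++ a.toList) := by
  cases a with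
  | none => simpa using hv
  | some c =>
    refine squareFreeWord_concat_iff.mpr ⟨hv, fun t ht => ?_⟩
    rcases eq_or_ne t [] with rfl | hne
    · exact ha (List.singleton_suffix_iff_getLast?_eq_some.mp ht).symm
    · exact htmp (endsWithTMP_iff.mpr ⟨t, c, hne, ht⟩)

/-- `w` ends with a word `t c t` where `t` has length `i`, that is, with a square of period
`i + 1` deprived of its last letter. For `0 < i` this is a `2⁻`-power. -/
def EndsWithAlmostSquare (i : ℕ) (w : List A) : Prop :=
  ∃ t c, t.length = i ∧ t ++ c :: t <:+ w

lemma endsWithAlmostSquare_concat {t v : List A} {c : A} (h : t ++ c :: t <:+ v) :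
    EndsWithAlmostSquare t.length (v ++ [c]) := by
  obtain ⟨d, s, hds⟩ := List.exists_cons_of_ne_nil (List.concat_ne_nil c t)
  refine ⟨s, d, by simpa using (congrArg List.length hds).symm, ?_⟩
  have hsq : d :: (s ++ d :: s) <:+ v ++ [c] := by
    have : d :: (s ++ d :: s) = (t ++ c :: t) ++ [c] := by
      rw [← List.cons_append, ← hds]
      simp
    exact this ▸ List.suffix_append_self_iff.mpr h
  exact (List.suffix_cons _ _).trans hsq

lemma EndsWithAlmostSquare.length_le {i : ℕ} {w : List A} (h : EndsWithAlmostSquare i w) :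
    2 * i + 1 ≤ w.length := by
  obtain ⟨t, c, rfl, ht⟩ := h
  have := ht.length_le
  simp only [List.length_append, List.length_cons] at this
  omega

lemma EndsWithAlmostSquare.getElem?_eq {i j : ℕ} {w : List A} (h : EndsWithAlmostSquare i w)
    (hj : w.length ≤ j + i) (hjw : j < w.length) : w[j]? = w[j - (i + 1)]? := by
  obtain ⟨t, c, rfl, r, rfl⟩ := h
  simp only [List.length_append, List.length_cons] at hj hjw
  obtain ⟨k, rfl⟩ : ∃ k, j = r.length + (t.length + (k + 1)) :=
    ⟨j - (r.length + t.length + 1), by omega⟩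
  rw [show r.length + (t.length + (k + 1)) - (t.length + 1) = r.length + k by omega]
  have hk : k < t.length := by omega
  simp [List.getElem?_append_right, List.getElem?_append_left hk]

/-- The almost square determines the letters of `w` beyond `v`. -/
lemma EndsWithAlmostSquare.prefix_or_prefix {i : ℕ} {v w w' : List A}
    (hw : EndsWithAlmostSquare i w) (hw' : EndsWithAlmostSquare i w') (hv : v <+: w)
    (hv' : v <+: w') (hl : w.length ≤ v.length + i) (hl' : w'.length ≤ v.length + i) :
    w <+: w' ∨ w' <+: w := by
  have agree : ∀ j, j < w.length → j < w'.length → w[j]? = w'[j]? := by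
    intro j
    induction j using Nat.strong_induction_on with
    | _ j ih =>
      intro hj hj'
      rcases lt_or_ge j v.length with hjv | hjv
      · obtain ⟨r, rfl⟩ := hv
        obtain ⟨r', rfl⟩ := hv'
        rw [List.getElem?_append_left hjv, List.getElem?_append_left hjv]
      · have := hw.length_le
        rw [hw.getElem?_eq (by omega) hj, hw'.getElem?_eq (by omega) hj']
        exact ih _ (by omega) (by omega) (by omega)
  rcases le_total w.length w'.length with hle | hle
  · refine .inl (List.prefix_iff_getElem?.mpr fun j hj => ?_)
    rw [← agree j hj (hj.trans_le hle), List.getElem?_eq_getElem hj]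
  · refine .inr (List.prefix_iff_getElem?.mpr fun j hj => ?_)
    rw [agree j (hj.trans_le hle) hj, List.getElem?_eq_getElem hj]

end Words

section Lam

variable {A : Type*} [LinearOrder A] {lo hi : ℕ}

lemma exists_normalized_map [Finite A] (w : List A) :
    ∃ π : Equiv.Perm A, Normalized (w.map π) := by
  obtain ⟨π, hπ⟩ := Finite.exists_min (fun π : Equiv.Perm A => w.map π)
  refine ⟨π, fun σ hlt => not_lt.mpr (hπ (σ * π)) ?_⟩
  rw [Equiv.Perm.coe_mul, ← List.map_map]
  exact hlt

lemma nil_mem_lam [Nonempty A] (hlo : 0 < lo) (hhi : lo ≤ hi) : ([] : List A) ∈ Lam lo hi := by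
  obtain ⟨a⟩ := ‹Nonempty A›
  refine ⟨fun π => by simp, List.replicate lo a ++ List.replicate lo a,
    ⟨⟨List.replicate lo a, by simp, by simpa using hhi, rfl⟩, ?_⟩, List.nil_prefix, ?_⟩
  · rintro f hf hne ⟨u, hu, -, rfl⟩
    refine hne (hf.sublist.eq_of_length_le ?_)
    simp only [List.length_append, List.length_replicate]
    omega
  · simp [hlo.ne']

/-- The elements of `Λ` that are suffixes of `w` up to a permutation of the alphabet; `Λ(w)` is
the longest of them. -/
def lamCandidates (lo hi : ℕ) (w : List A) : Set (List A) :=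
  {v | v ∈ Lam lo hi ∧ ∃ π : Equiv.Perm A, v.map π <:+ w}

lemma lamOf_eq_of_lamCandidates_eq {v w : List A}
    (h : lamCandidates lo hi v = lamCandidates lo hi w) : lamOf lo hi v = lamOf lo hi w := by
  have lamOf_eq (w : List A) : lamOf lo hi w =
      if h : ∃ v, v ∈ lamCandidates lo hi w ∧
        ∀ v', v' ∈ lamCandidates lo hi w → v'.length ≤ v.length
      then h.choose else [] := rfl
  rw [lamOf_eq, lamOf_eq, h]

lemma lamOf_mem_lamCandidates_and_length_le [Finite A] {w : List A}
    (hw : (lamCandidates lo hi w).Nonempty) :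
    lamOf lo hi w ∈ lamCandidates lo hi w ∧
      ∀ v ∈ lamCandidates lo hi w, v.length ≤ (lamOf lo hi w).length := by
  have hfin : (lamCandidates lo hi w).Finite := by
    refine (List.finite_length_le A w.length).subset ?_
    rintro v ⟨-, π, hπ⟩
    simpa using hπ.length_le
  have hmax := Set.exists_max_image _ List.length hfin hw
  have hlam : lamOf lo hi w = hmax.choose := dif_pos hmax
  exact hlam ▸ hmax.choose_spec

lemma lamOf_mem_lam [Finite A] [Nonempty A] (hlo : 0 < lo) (hhi : lo ≤ hi) (w : List A) :
    lamOf lo hi w ∈ Lam lo hi :=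
  (lamOf_mem_lamCandidates_and_length_le
    ⟨[], nil_mem_lam hlo hhi, 1, List.nil_suffix⟩).1.1

lemma lamCandidates_map (π : Equiv.Perm A) (w : List A) :
    lamCandidates lo hi (w.map π) = lamCandidates lo hi w := by
  have subset_map (σ : Equiv.Perm A) (u : List A) :
      lamCandidates lo hi u ⊆ lamCandidates lo hi (u.map σ) := by
    rintro v ⟨hv, τ, hτ⟩
    exact ⟨hv, σ * τ, by simpa only [Equiv.Perm.coe_mul, ← List.map_map] using hτ.map σ⟩
  exact (map_inv_map π w ▸ subset_map π⁻¹ (w.map π)).antisymm (subset_map π w)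

lemma lamOf_map (π : Equiv.Perm A) (w : List A) : lamOf lo hi (w.map π) = lamOf lo hi w :=
  lamOf_eq_of_lamCandidates_eq (lamCandidates_map π w)

/-- The suffix of `w` that `Λ(w)` represents. It is the part of the past of `w` that matters for
the short squares to come. -/
noncomputable def lamSuffix (lo hi : ℕ) (w : List A) : List A :=
  w.drop (w.length - (lamOf lo hi w).length)

lemma lamSuffix_suffix (w : List A) : lamSuffix lo hi w <:+ w :=
  List.drop_suffix _ _

lemma exists_map_lamOf_eq_lamSuffix [Finite A] (w : List A) :
    ∃ π : Equiv.Perm A, (lamOf lo hi w).map π = lamSuffix lo hi w := by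
  suffices ∃ π : Equiv.Perm A, (lamOf lo hi w).map π <:+ w by
    obtain ⟨π, hπ⟩ := this
    exact ⟨π, by simpa [lamSuffix] using List.suffix_iff_eq_drop.mp hπ⟩
  by_cases hw : (lamCandidates lo hi w).Nonempty
  · exact (lamOf_mem_lamCandidates_and_length_le hw).1.2
  · have hlam : lamOf lo hi w = [] := dif_neg fun ⟨v, hv, _⟩ => hw ⟨v, hv⟩
    exact ⟨1, by simp [hlam]⟩

lemma suffix_lamSuffix [Finite A] {w x s : List A} (hs : MinSq lo hi s) (hxs : x <+: s)
    (hne : x ≠ s) (hxw : x <:+ w) : x <:+ lamSuffix lo hi w := by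
  obtain ⟨σ, hσ⟩ := exists_normalized_map x
  have hmem : x.map σ ∈ lamCandidates lo hi w :=
    ⟨⟨hσ, s.map σ, hs.map σ, hxs.map σ, (List.map_injective_iff.mpr σ.injective).ne hne⟩, σ⁻¹,
      by rwa [map_inv_map]⟩
  have hlen := (lamOf_mem_lamCandidates_and_length_le ⟨_, hmem⟩).2 _ hmem
  obtain ⟨π, hπ⟩ := exists_map_lamOf_eq_lamSuffix (lo := lo) (hi := hi) w
  refine List.suffix_of_suffix_length_le hxw (lamSuffix_suffix w) ?_
  simpa only [← hπ, List.length_map] using hlen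

lemma lamCandidates_append [Finite A] (w t : List A) :
    lamCandidates lo hi (w ++ t) = lamCandidates lo hi (lamSuffix lo hi w ++ t) := by
  ext u
  refine and_congr_right fun ⟨_, s, hs, hus, hne⟩ => exists_congr fun π => ?_
  simp only [suffix_append_iff]
  refine or_congr_right (exists_congr fun x => and_congr_right fun hx => ⟨fun hxw => ?_,
    fun hxw => hxw.trans (lamSuffix_suffix w)⟩)
  have hxu : x <+: u.map π := hx ▸ List.prefix_append x t
  refine suffix_lamSuffix (hs.map π) (hxu.trans (hus.map π)) ?_ hxw
  rintro rfl
  exact hne (hus.eq_of_length_le (by simpa using hxu.length_le))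

lemma lamOf_append [Finite A] (w t : List A) :
    lamOf lo hi (w ++ t) = lamOf lo hi (lamSuffix lo hi w ++ t) :=
  lamOf_eq_of_lamCandidates_eq (lamCandidates_append w t)

/-- A minimal square straddling the end of `w` leaves a proper prefix of itself as a suffix of
`w`, hence of `lamSuffix lo hi w`. -/
lemma hasSq_append_iff [Finite A] {w : List A} (hw : ¬ HasSq lo hi w) (t : List A) :
    HasSq lo hi (w ++ t) ↔ HasSq lo hi (lamSuffix lo hi w ++ t) := by
  constructor
  · intro h
    obtain ⟨s, hs, hsw⟩ := hasSq_iff_exists_minSq.mp h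
    refine hasSq_iff_exists_minSq.mpr ⟨s, hs, List.infix_append_iff_ne_nil.mpr ?_⟩
    rcases List.infix_append_iff_ne_nil.mp hsw with hinf | hinf | ⟨x, y, hx, hy, rfl, hxw, hyt⟩
    · exact absurd (hasSq_iff_exists_minSq.mpr ⟨s, hs, hinf⟩) hw
    · exact .inr (.inl hinf)
    · have hx' := suffix_lamSuffix hs (List.prefix_append x y) (by simpa using hy) hxw
      exact .inr (.inr ⟨x, y, hx, hy, rfl, hx', hyt⟩)
  · obtain ⟨r, hr⟩ := lamSuffix_suffix (lo := lo) (hi := hi) w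
    exact fun h => h.mono ⟨r, [], by simp [← List.append_assoc, hr]⟩

/-- The weight `C_{Λ(w)}` of a word `w` without squares of period between `lo` and `hi`, and
`0` for the other words: the summand in the inequality that the coefficients satisfy. -/
noncomputable def freeWeight (lo hi : ℕ) (C : List A → ℝ) (w : List A) : ℝ :=
  if ¬ HasSq lo hi w then C (lamOf lo hi w) else 0

variable {C : List A → ℝ}

lemma freeWeight_map (π : Equiv.Perm A) (w : List A) :
    freeWeight lo hi C (w.map π) = freeWeight lo hi C w := by
  simp only [freeWeight, hasSq_map_iff, lamOf_map]

lemma freeWeight_append [Finite A] {w : List A} (hw : ¬ HasSq lo hi w) (t : List A) :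
    freeWeight lo hi C (w ++ t) = freeWeight lo hi C (lamSuffix lo hi w ++ t) := by
  simp only [freeWeight, hasSq_append_iff hw, lamOf_append w]

/-- The inequality `α C_v ≤ Σ_b C_{Λ(vab)}` required of the coefficients, for every `v ∈ Λ` and
every reply `a` of Ben to `v`, where `none` stands for skipping his turn. -/
def IsExpanding [Fintype A] (lo hi : ℕ) (α : ℝ) (C : List A → ℝ) : Prop :=
  ∀ v ∈ Lam lo hi, ∀ a : Option A, (v = [] ∨ a ≠ v.getLast?) →
    α * C v ≤ ∑ b : A, freeWeight lo hi C (v ++ a.toList ++ [b])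

variable [Fintype A] [Nonempty A] {α : ℝ}

/-- The inequality at `Λ(w)` transfers to `w`, as `w` and `Λ(w)` have the same continuations
without short squares. -/
lemma IsExpanding.mul_le_sum (hC : IsExpanding lo hi α C) (hlo : 0 < lo) (hhi : lo ≤ hi)
    {w : List A} {a : Option A} (hw : ¬ HasSq lo hi w) (ha : a ≠ w.getLast?) :
    α * C (lamOf lo hi w) ≤ ∑ b : A, freeWeight lo hi C (w ++ a.toList ++ [b]) := by
  obtain ⟨π, hπ⟩ := exists_map_lamOf_eq_lamSuffix (lo := lo) (hi := hi) w
  have hlast : lamOf lo hi w = [] ∨ a.map ⇑π⁻¹ ≠ (lamOf lo hi w).getLast? := by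
    refine or_iff_not_imp_left.mpr fun hne hlast => ha ?_
    have hsuf : (lamOf lo hi w).map π <:+ w := hπ ▸ lamSuffix_suffix w
    rw [← getLast?_eq_of_suffix hsuf (by simpa using hne), List.getLast?_map, ← hlast]
    simp [Option.map_map, Function.comp_def]
  calc α * C (lamOf lo hi w)
      ≤ ∑ b : A, freeWeight lo hi C (lamOf lo hi w ++ (a.map ⇑π⁻¹).toList ++ [b]) :=
        hC _ (lamOf_mem_lam hlo hhi w) _ hlast
    _ = ∑ b : A, freeWeight lo hi C (w ++ a.toList ++ [π b]) := by
        refine Finset.sum_congr rfl fun b _ => ?_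
        rw [List.append_assoc w, freeWeight_append hw, ← hπ, ← freeWeight_map π]
        cases a <;> simp
    _ = ∑ b : A, freeWeight lo hi C (w ++ a.toList ++ [b]) :=
        Equiv.sum_comp π fun b => freeWeight lo hi C (w ++ a.toList ++ [b])

/-- Ben could complete the short square at once, after which Ann has no continuation without
short squares. -/
lemma IsExpanding.lamOf_eq_zero {p : ℕ} (hC : IsExpanding 1 p α C) (hα : 0 < α)
    (hnn : ∀ v ∈ Lam 1 p, 0 ≤ C v) {w t : List A} {c : A} (hw : ¬ HasSq 1 p w)
    (htw : t ++ c :: t <:+ w) (ht : t ≠ []) (htp : t.length < p) : C (lamOf 1 p w) = 0 := by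
  have hp : 1 ≤ p := by omega
  have hc : some c ≠ w.getLast? := by
    intro hc
    have hct : [c] <:+ t := by
      rw [List.singleton_suffix_iff_getLast?_eq_some, hc]
      exact getLast?_eq_of_suffix
        ((List.suffix_append_of_suffix (List.suffix_cons c t)).trans htw) ht
    obtain ⟨r, rfl⟩ := hct
    exact hw ⟨[c], le_rfl, hp, List.IsInfix.trans ⟨r, r ++ [c], by simp⟩ htw.isInfix⟩
  have hsq : HasSq 1 p (w ++ [c]) := by
    refine ⟨t ++ [c], by simp, by simpa using htp, ?_⟩
    simpa using (List.suffix_append_self_iff (l₃ := [c]).mpr htw).isInfix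
  have hle : α * C (lamOf 1 p w) ≤ 0 := by
    refine (hC.mul_le_sum one_pos hp hw hc).trans_eq (Finset.sum_eq_zero fun b _ => if_neg ?_)
    exact not_not.mpr (hsq.mono (List.prefix_append _ _).isInfix)
  exact le_antisymm (nonpos_of_mul_nonpos_right hle hα) (hnn _ (lamOf_mem_lam one_pos hp w))

end Lam

section Game

variable {A : Type*} {S : Finset (List A)}

lemma eq_of_prefix_of_prefix (hS : IsAntichain (· <+: ·) (S : Set (List A))) {u v w : List A}
    (hu : u ∈ S) (hv : v ∈ S) (huw : u <+: w) (hvw : v <+: w) : u = v :=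
  (List.prefix_or_prefix_of_prefix huw hvw).elim (hS.eq hu hv) fun h => (hS.eq hv hu h).symm

variable [Fintype A] {φ : List A → Option A} {good : List A → Prop}

/-- The words that a full round, Ben's reply `φ v` followed by any move of Ann, can produce
from the words `v ∈ S`. -/
noncomputable def extensions (φ : List A → Option A) (S : Finset (List A)) : Finset (List A) :=
  (S ×ˢ Finset.univ).image fun q => q.1 ++ (φ q.1).toList ++ [q.2]

/-- The words that can be reached just after Ann's move number `n + 1`, against Ben playing `φ`,
if Ann has to keep the word `good` after each of her moves. The numbering starts at `0`: this is
the set `S_{n+1}` of the hard game. -/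
noncomputable def playable (good : List A → Prop) (φ : List A → Option A) : ℕ → Finset (List A)
  | 0 => (Finset.univ.image fun a => [a]).filter good
  | n + 1 => (extensions φ (playable good φ n)).filter good

lemma mem_extensions {w : List A} :
    w ∈ extensions φ S ↔ ∃ v ∈ S, ∃ b, v ++ (φ v).toList ++ [b] = w := by
  simp only [extensions, Finset.mem_image, Finset.mem_product, Finset.mem_univ, and_true,
    Prod.exists, exists_and_left]

lemma mem_playable_zero {v : List A} : v ∈ playable good φ 0 ↔ (∃ a, [a] = v) ∧ good v := by
  simp only [playable, Finset.mem_filter, Finset.mem_image, Finset.mem_univ, true_and]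

lemma mem_playable_succ {n : ℕ} {w : List A} :
    w ∈ playable good φ (n + 1) ↔ w ∈ extensions φ (playable good φ n) ∧ good w :=
  Finset.mem_filter

lemma good_of_mem_playable {n : ℕ} {v : List A} (hv : v ∈ playable good φ n) : good v := by
  cases n with
  | zero => exact (mem_playable_zero.mp hv).2
  | succ n => exact (mem_playable_succ.mp hv).2

lemma ne_nil_of_mem_playable {n : ℕ} {v : List A} (hv : v ∈ playable good φ n) : v ≠ [] := by
  cases n with
  | zero =>
    obtain ⟨⟨a, rfl⟩, -⟩ := mem_playable_zero.mp hv
    exact List.cons_ne_nil a []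
  | succ n =>
    obtain ⟨u, -, b, rfl⟩ := mem_extensions.mp (mem_playable_succ.mp hv).1
    exact List.append_ne_nil_of_right_ne_nil _ (List.cons_ne_nil b [])

lemma exists_prefix_of_mem_extensions {w : List A} (hw : w ∈ extensions φ S) :
    ∃ v ∈ S, v <+: w ∧ w.length ≤ v.length + 2 := by
  obtain ⟨v, hv, b, rfl⟩ := mem_extensions.mp hw
  refine ⟨v, hv, (List.prefix_append _ _).trans (List.prefix_append _ _), ?_⟩
  cases φ v <;> simp

lemma length_le_of_mem_playable {n : ℕ} {v : List A} (hv : v ∈ playable good φ n) :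
    v.length ≤ 2 * n + 1 := by
  induction n generalizing v with
  | zero =>
    obtain ⟨⟨a, rfl⟩, -⟩ := mem_playable_zero.mp hv
    exact le_rfl
  | succ n ih =>
    obtain ⟨u, hu, -, hlen⟩ := exists_prefix_of_mem_extensions (mem_playable_succ.mp hv).1
    have := ih hu
    omega

lemma exists_prefix_of_mem_extensions_playable {k j : ℕ} {w : List A}
    (hw : w ∈ extensions φ (playable good φ (k + j))) :
    ∃ v ∈ playable good φ k, v <+: w ∧ w.length ≤ v.length + 2 * (j + 1) := by
  induction j generalizing w with
  | zero => exact exists_prefix_of_mem_extensions hw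
  | succ j ih =>
    obtain ⟨u, hu, huw, hlen⟩ := exists_prefix_of_mem_extensions hw
    obtain ⟨v, hv, hvu, hlen'⟩ := ih (mem_playable_succ.mp hu).1
    exact ⟨v, hv, hvu.trans huw, by omega⟩

lemma isAntichain_extensions (hS : IsAntichain (· <+: ·) (S : Set (List A))) :
    IsAntichain (· <+: ·) (extensions φ S : Set (List A)) := by
  intro w hw w' hw' hne hpre
  obtain ⟨v, hv, b, rfl⟩ := mem_extensions.mp hw
  obtain ⟨v', hv', b', rfl⟩ := mem_extensions.mp hw'
  obtain rfl : v = v' := by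
    rw [List.append_assoc] at hpre
    rw [List.append_assoc v'] at hpre
    exact eq_of_prefix_of_prefix hS hv hv' ((List.prefix_append _ _).trans hpre)
      (List.prefix_append _ _)
  exact hne (hpre.eq_of_length_le (by simp))

lemma isAntichain_playable (n : ℕ) :
    IsAntichain (· <+: ·) (playable good φ n : Set (List A)) := by
  induction n with
  | zero =>
    intro w hw w' hw' hne hpre
    obtain ⟨⟨a, rfl⟩, -⟩ := mem_playable_zero.mp hw
    obtain ⟨⟨a', rfl⟩, -⟩ := mem_playable_zero.mp hw'
    exact hne (hpre.eq_of_length_le le_rfl)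
  | succ n ih => exact (isAntichain_extensions ih).subset (Finset.filter_subset _ _)

lemma sum_extensions {M : Type*} [AddCommMonoid M]
    (hS : IsAntichain (· <+: ·) (S : Set (List A))) (f : List A → M) :
    ∑ w ∈ extensions φ S, f w = ∑ v ∈ S, ∑ b : A, f (v ++ (φ v).toList ++ [b]) := by
  rw [extensions, Finset.sum_image, Finset.sum_product]
  rintro ⟨v, b⟩ hv ⟨v', b'⟩ hv' (heq : v ++ (φ v).toList ++ [b] = v' ++ (φ v').toList ++ [b'])
  obtain rfl : v = v' := by
    refine eq_of_prefix_of_prefix hS (Finset.mem_product.mp hv).1 (Finset.mem_product.mp hv').1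
      (w := v ++ (φ v).toList ++ [b]) ?_ ?_
    · simp only [List.append_assoc, List.prefix_append]
    · simp only [heq, List.append_assoc, List.prefix_append]
  simpa using heq

/-- An almost square `t c t` with `|t| = i` at the end of `w` determines `w` from the word reached
`i / 2` rounds earlier, since each round appends at most two letters. -/
lemma card_filter_endsWithAlmostSquare_le {i n : ℕ} (hi : 2 ≤ i) (hin : i / 2 ≤ n + 1) :
    ((extensions φ (playable good φ n)).filter (EndsWithAlmostSquare i)).card ≤
      (playable good φ (n + 1 - i / 2)).card := by
  obtain ⟨j, hj⟩ : ∃ j, i / 2 = j + 1 := ⟨i / 2 - 1, by omega⟩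
  obtain ⟨k, rfl⟩ : ∃ k, n = k + j := ⟨n - j, by omega⟩
  rw [show k + j + 1 - i / 2 = k by omega]
  refine Finset.card_le_card_of_forall_subsingleton
    (fun w v => v <+: w ∧ w.length ≤ v.length + 2 * (j + 1)) (fun w hw =>
      exists_prefix_of_mem_extensions_playable (Finset.mem_filter.mp hw).1) ?_
  rintro v - w ⟨hw, hvw, hlen⟩ w' ⟨hw', hvw', hlen'⟩
  obtain ⟨hw, hsq⟩ := Finset.mem_filter.mp hw
  obtain ⟨hw', hsq'⟩ := Finset.mem_filter.mp hw'
  have hanti : IsAntichain (· <+: ·) (extensions φ (playable good φ (k + j)) : Set (List A)) :=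
    isAntichain_extensions (isAntichain_playable (k + j))
  rcases hsq.prefix_or_prefix hsq' hvw hvw' (by omega) (by omega) with h | h
  · exact hanti.eq hw hw' h
  · exact (hanti.eq hw' hw h).symm

end Game

section Weights

variable {A : Type*} [LinearOrder A] {p : ℕ} {C : List A → ℝ}

/-- The condition imposed on the words obtained just after Ann's moves in the hard game with
coefficients `C`, for short squares of period at most `p`. -/
def IsGood (p : ℕ) (C : List A → ℝ) (u : List A) : Prop :=
  SquareFreeWord u ∧ 0 < C (lamOf 1 p u) ∧ ¬ EndsWithTMP u

variable [Fintype A]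

/-- The weight `Ŝ_{n+1}` of the set `S_{n+1}` of words playable after Ann's move number
`n + 1`. -/
noncomputable def playableWeight (p : ℕ) (C : List A → ℝ) (φ : List A → Option A) (n : ℕ) : ℝ :=
  ∑ v ∈ playable (IsGood p C) φ n, C (lamOf 1 p v)

lemma playableWeight_nonneg (φ : List A → Option A) (n : ℕ) : 0 ≤ playableWeight p C φ n :=
  Finset.sum_nonneg fun _ hv => (good_of_mem_playable hv).2.1.le

variable [Nonempty A] {φ : List A → Option A} {α m M : ℝ}

lemma card_playable_mul_le (hp : 0 < p) (hlb : ∀ v ∈ Lam 1 p, C v = 0 ∨ m ≤ C v) (n : ℕ) :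
    (playable (IsGood p C) φ n).card * m ≤ playableWeight p C φ n := by
  rw [← nsmul_eq_mul]
  refine Finset.card_nsmul_le_sum _ _ _ fun v hv => ?_
  exact (hlb _ (lamOf_mem_lam one_pos hp v)).resolve_left (good_of_mem_playable hv).2.1.ne'

lemma card_filter_endsWithAlmostSquare_mul_le (hp : 0 < p) (hm : 0 < m) (hM : 0 ≤ M)
    (hlb : ∀ v ∈ Lam 1 p, C v = 0 ∨ m ≤ C v) {i n : ℕ} (hi : 2 ≤ i) (hin : i / 2 ≤ n + 1) :
    ((extensions φ (playable (IsGood p C) φ n)).filter (EndsWithAlmostSquare i)).card * M ≤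
      M / m * playableWeight p C φ (n + 1 - i / 2) := by
  have hcard := card_filter_endsWithAlmostSquare_le (φ := φ) (good := IsGood p C) hi hin
  have hweight := card_playable_mul_le (φ := φ) hp hlb (n + 1 - i / 2)
  calc _ ≤ ((playable (IsGood p C) φ (n + 1 - i / 2)).card : ℝ) * M := by gcongr
    _ = M / m * ((playable (IsGood p C) φ (n + 1 - i / 2)).card * m) := by field_simp
    _ ≤ _ := by gcongr

lemma IsExpanding.exists_endsWithAlmostSquare (hC : IsExpanding 1 p α C) (hα : 0 < α) (hp : 0 < p)
    (hnn : ∀ v ∈ Lam 1 p, 0 ≤ C v) {u : List A} {b : A} (hu : SquareFreeWord u)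
    (hsq : ¬ HasSq 1 p (u ++ [b])) (hne : C (lamOf 1 p (u ++ [b])) ≠ 0)
    (hbad : ¬ IsGood p C (u ++ [b])) : ∃ i, p ≤ i ∧ EndsWithAlmostSquare i (u ++ [b]) := by
  by_cases hfree : SquareFreeWord (u ++ [b])
  · have hpos := (hnn _ (lamOf_mem_lam one_pos hp (u ++ [b]))).lt_of_ne' hne
    have htmp : EndsWithTMP (u ++ [b]) := not_not.mp fun h => hbad ⟨hfree, hpos, h⟩
    obtain ⟨t, c, ht, htu⟩ := endsWithTMP_iff.mp htmp
    exact ⟨t.length, not_lt.mp fun htp => hne (hC.lamOf_eq_zero hα hnn hsq htu ht htp),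
      t, c, rfl, htu⟩
  · obtain ⟨t, ht⟩ : ∃ t, t ++ b :: t <:+ u := by
      simpa only [squareFreeWord_concat_iff, hu, true_and, not_forall, not_not] using hfree
    refine ⟨t.length, not_lt.mp fun htp => hsq ?_, endsWithAlmostSquare_concat ht⟩
    refine ⟨t ++ [b], by simp, by simpa using htp, ?_⟩
    simpa using (List.suffix_append_self_iff (l₃ := [b]).mpr ht).isInfix

lemma IsExpanding.freeWeight_le (hC : IsExpanding 1 p α C) (hα : 0 < α) (hp : 0 < p)
    (hnn : ∀ v ∈ Lam 1 p, 0 ≤ C v) (hub : ∀ v ∈ Lam 1 p, C v ≤ M) {u : List A} {b : A}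
    (hu : SquareFreeWord u) {N : ℕ} (hN : (u ++ [b]).length ≤ 2 * N) :
    freeWeight 1 p C (u ++ [b]) ≤
      (if IsGood p C (u ++ [b]) then C (lamOf 1 p (u ++ [b])) else 0) +
        ∑ i ∈ Finset.Ico p N, if EndsWithAlmostSquare i (u ++ [b]) then M else 0 := by
  set w := u ++ [b]
  have hCw := lamOf_mem_lam one_pos hp w
  have hM : 0 ≤ M := (hnn _ hCw).trans (hub _ hCw)
  have hterm : ∀ i, 0 ≤ if EndsWithAlmostSquare i w then M else 0 := fun i => by
    split_ifs <;> simp [hM]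
  have hsum : 0 ≤ ∑ i ∈ Finset.Ico p N, if EndsWithAlmostSquare i w then M else 0 :=
    Finset.sum_nonneg fun i _ => hterm i
  by_cases hgood : IsGood p C w
  · rw [freeWeight, if_pos (hgood.1.not_hasSq one_pos), if_pos hgood]
    exact le_add_of_nonneg_right hsum
  rw [if_neg hgood, zero_add]
  by_cases hfree : HasSq 1 p w
  · simpa only [freeWeight, hfree, not_true_eq_false, if_false] using hsum
  rw [freeWeight, if_pos hfree]
  by_cases hne : C (lamOf 1 p w) = 0
  · exact hne.trans_le hsum
  obtain ⟨i, hpi, hi⟩ := hC.exists_endsWithAlmostSquare hα hp hnn hu hfree hne hgood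
  have hiN : i ∈ Finset.Ico p N := by
    have : 2 * i + 1 ≤ w.length := hi.length_le
    exact Finset.mem_Ico.mpr ⟨hpi, by omega⟩
  calc C (lamOf 1 p w) ≤ if EndsWithAlmostSquare i w then M else 0 := by
        rw [if_pos hi]
        exact hub _ hCw
    _ ≤ _ := Finset.single_le_sum (fun i _ => hterm i) hiN

lemma IsExpanding.mul_playableWeight_le (hC : IsExpanding 1 p α C) (hα : 0 < α) (hp : 2 ≤ p)
    (hm : 0 < m) (hnn : ∀ v ∈ Lam 1 p, 0 ≤ C v) (hub : ∀ v ∈ Lam 1 p, C v ≤ M)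
    (hlb : ∀ v ∈ Lam 1 p, C v = 0 ∨ m ≤ C v) (hφ : ∀ v ≠ [], φ v ≠ v.getLast?) (n : ℕ) :
    α * playableWeight p C φ n ≤ playableWeight p C φ (n + 1) +
      M / m * ∑ i ∈ Finset.Ico p (n + 2), playableWeight p C φ (n + 1 - i / 2) := by
  have hp0 : 0 < p := two_pos.trans_le hp
  let S := playable (IsGood p C) φ
  have hM : 0 ≤ M := (hnn _ (nil_mem_lam one_pos hp0)).trans (hub _ (nil_mem_lam one_pos hp0))
  have free {v : List A} (hv : v ∈ S n) : SquareFreeWord (v ++ (φ v).toList) :=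
    have hgood := good_of_mem_playable hv
    hgood.1.append_toList hgood.2.2 (hφ v (ne_nil_of_mem_playable hv))
  have hlen {v : List A} (hv : v ∈ S n) (b : A) :
      (v ++ (φ v).toList ++ [b]).length ≤ 2 * (n + 2) := by
    have := length_le_of_mem_playable hv
    have := (φ v).length_toList_le
    simp only [List.length_append, List.length_singleton]
    omega
  calc α * playableWeight p C φ n
      ≤ ∑ w ∈ extensions φ (S n), freeWeight 1 p C w := by
        rw [sum_extensions (isAntichain_playable n), playableWeight, Finset.mul_sum]
        refine Finset.sum_le_sum fun v hv => hC.mul_le_sum one_pos hp0 ?_ ?_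
        · exact (good_of_mem_playable hv).1.not_hasSq one_pos
        · exact hφ v (ne_nil_of_mem_playable hv)
    _ ≤ ∑ w ∈ extensions φ (S n), ((if IsGood p C w then C (lamOf 1 p w) else 0) +
          ∑ i ∈ Finset.Ico p (n + 2), if EndsWithAlmostSquare i w then M else 0) := by
        refine Finset.sum_le_sum fun w hw => ?_
        obtain ⟨v, hv, b, rfl⟩ := mem_extensions.mp hw
        exact hC.freeWeight_le hα hp0 hnn hub (free hv) (hlen hv b)
    _ = playableWeight p C φ (n + 1) + ∑ i ∈ Finset.Ico p (n + 2),
          ((extensions φ (S n)).filter (EndsWithAlmostSquare i)).card * M := by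
        rw [Finset.sum_add_distrib, ← Finset.sum_filter, Finset.sum_comm]
        simp only [← Finset.sum_filter, Finset.sum_const, nsmul_eq_mul]
        rfl
    _ ≤ _ := by
        rw [Finset.mul_sum]
        refine add_le_add_right (Finset.sum_le_sum fun i hi => ?_) _
        obtain ⟨hpi, hin⟩ := Finset.mem_Ico.mp hi
        exact card_filter_endsWithAlmostSquare_mul_le hp0 hm hM hlb (hp.trans hpi) (by omega)

end Weights

section Growth

lemma sum_Ico_pow_half_le {x : ℝ} (hx : 0 ≤ x) (hx1 : x < 1) (p N : ℕ) :
    ∑ i ∈ Finset.Ico p N, x ^ (i / 2) ≤ 2 * x ^ (p / 2) / (1 - x) := by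
  have double (q K : ℕ) : ∑ i ∈ Finset.Ico (2 * q) (2 * (q + K)), x ^ (i / 2) =
      2 * ∑ k ∈ Finset.Ico q (q + K), x ^ k := by
    induction K with
    | zero => simp
    | succ K ih =>
      rw [show 2 * (q + (K + 1)) = 2 * (q + K) + 1 + 1 by ring, ← add_assoc q,
        Finset.sum_Ico_succ_top (by omega), Finset.sum_Ico_succ_top (by omega),
        Finset.sum_Ico_succ_top (by omega), ih, show 2 * (q + K) / 2 = q + K by omega,
        show (2 * (q + K) + 1) / 2 = q + K by omega]
      ring
  calc ∑ i ∈ Finset.Ico p N, x ^ (i / 2)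
      ≤ ∑ i ∈ Finset.Ico (2 * (p / 2)) (2 * (p / 2 + N)), x ^ (i / 2) :=
        Finset.sum_le_sum_of_subset_of_nonneg
          (Finset.Ico_subset_Ico (by omega) (by omega)) fun i _ _ => pow_nonneg hx _
    _ = 2 * ∑ k ∈ Finset.Ico (p / 2) (p / 2 + N), x ^ k := double _ _
    _ ≤ 2 * (x ^ (p / 2) / (1 - x)) := by
        gcongr
        exact geom_sum_Ico_le_of_lt_one hx hx1
    _ = 2 * x ^ (p / 2) / (1 - x) := (mul_div_assoc _ _ _).symm

/-- A sequence whose expansion by the factor `α` is only disturbed by earlier terms, from delay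
`p / 2` on, grows geometrically: by induction the term of delay `k` is at most `β^{1-k}` times the
current one, so the disturbance is bounded by a geometric series. -/
lemma mul_le_succ_of_mul_le_add_sum {W : ℕ → ℝ} {α β γ : ℝ} {p : ℕ} (hW : ∀ n, 0 ≤ W n)
    (hp : 2 ≤ p) (hβ : 1 < β) (hγ : 0 ≤ γ)
    (hα : β + γ * (2 * β ^ 2 / (β ^ (p / 2) * (β - 1))) ≤ α)
    (hrec : ∀ n, α * W n ≤ W (n + 1) + γ * ∑ i ∈ Finset.Ico p (n + 2), W (n + 1 - i / 2)) (n : ℕ) :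
    β * W n ≤ W (n + 1) := by
  have hβ0 : 0 < β := one_pos.trans hβ
  induction n using Nat.strong_induction_on with
  | _ n ih =>
    have decay : ∀ k ≤ n, β ^ k * W (n - k) ≤ W n := by
      intro k hk
      simpa only [add_zero, Nat.sub_add_cancel hk] using
        geom_le (u := fun j => W (n - k + j)) hβ0.le k fun j hj => ih (n - k + j) (by omega)
    have delayed : ∀ i ∈ Finset.Ico p (n + 2),
        W (n + 1 - i / 2) ≤ β⁻¹ ^ (i / 2) * (β * W n) := by
      intro i hi
      obtain ⟨hpi, hin⟩ := Finset.mem_Ico.mp hi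
      obtain ⟨k, hk⟩ : ∃ k, i / 2 = k + 1 := ⟨i / 2 - 1, by omega⟩
      rw [hk, show n + 1 - (k + 1) = n - k by omega, inv_pow, pow_succ, ← div_eq_inv_mul,
        mul_comm β, mul_div_mul_right _ _ hβ0.ne', le_div_iff₀' (pow_pos hβ0 k)]
      exact decay k (by omega)
    have disturbance : ∑ i ∈ Finset.Ico p (n + 2), W (n + 1 - i / 2) ≤
        2 * β ^ 2 / (β ^ (p / 2) * (β - 1)) * W n :=
      calc _ ≤ ∑ i ∈ Finset.Ico p (n + 2), β⁻¹ ^ (i / 2) * (β * W n) := Finset.sum_le_sum delayed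
        _ ≤ 2 * β⁻¹ ^ (p / 2) / (1 - β⁻¹) * (β * W n) := by
          rw [← Finset.sum_mul]
          exact mul_le_mul_of_nonneg_right
            (sum_Ico_pow_half_le (inv_nonneg.mpr hβ0.le) (inv_lt_one_of_one_lt₀ hβ) p _)
            (mul_nonneg hβ0.le (hW n))
        _ = _ := by
          have := sub_ne_zero.mpr hβ.ne'
          rw [inv_pow]
          field_simp
    have := mul_le_mul_of_nonneg_right hα (hW n)
    have := mul_le_mul_of_nonneg_left disturbance hγ
    linarith [hrec n]

end Growth

section HardGame

lemma playableH_succ_iff {φ : List (Fin 6) → Option (Fin 6)} {C : List (Fin 6) → ℝ} {n : ℕ}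
    {v : List (Fin 6)} : PlayableH φ C (n + 1) v ↔ v ∈ playable (IsGood 8 C) φ n := by
  induction n generalizing v with
  | zero =>
    refine ⟨fun h => ?_, fun h => ?_⟩
    · cases h with
      | base a ha => exact mem_playable_zero.mpr ⟨⟨a, rfl⟩, ha⟩
      | step a hv => nomatch hv
    · obtain ⟨⟨a, rfl⟩, hgood⟩ := mem_playable_zero.mp h
      exact .base a hgood
  | succ n ih =>
    refine ⟨fun h => ?_, fun h => ?_⟩
    · cases h with
      | step a hv hgood =>
        exact mem_playable_succ.mpr ⟨mem_extensions.mpr ⟨_, ih.mp hv, a, rfl⟩, hgood⟩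
    · obtain ⟨hv, hgood⟩ := mem_playable_succ.mp h
      obtain ⟨u, hu, a, rfl⟩ := mem_extensions.mp hv
      exact .step a (ih.mpr hu) hgood

lemma shatH_succ (φ : List (Fin 6) → Option (Fin 6)) (C : List (Fin 6) → ℝ) (n : ℕ) :
    ShatH φ C (n + 1) = playableWeight 8 C φ n := by
  rw [playableWeight, ← finsum_mem_coe_finset, ShatH]
  simp only [playableH_succ_iff, Finset.setOfPred_mem]

/-- With `F` the fraction in `h`, both `1 ≤ γ` and `α ≤ 3` give `F ≤ 3 - β`, and this bound on `β`
is what makes `F` at least the sum `2 / (β ^ 2 * (β - 1))` of the geometric series. -/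
lemma add_mul_div_le_of_le_sub {α β γ : ℝ} (hα : α ≤ 3) (hγ : 1 ≤ γ) (hβ : 1 < β)
    (h : β ≤ α - γ * (β ^ ((1 : ℤ) - 8) * (β ^ (3 + 8 / 2) + 2 * β ^ (2 + 8 / 2) +
      β ^ (1 + 8 / 2) - β ^ 2 - 1) / ((1 + β) * (β - 1) ^ 2))) :
    β + γ * (2 * β ^ 2 / (β ^ (8 / 2) * (β - 1))) ≤ α := by
  have hβ0 : 0 < β := one_pos.trans hβ
  have hβ1 : 0 < β - 1 := sub_pos.mpr hβ
  set F := β ^ ((1 : ℤ) - 8) * (β ^ (3 + 8 / 2) + 2 * β ^ (2 + 8 / 2) +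
      β ^ (1 + 8 / 2) - β ^ 2 - 1) / ((1 + β) * (β - 1) ^ 2) with hF
  have hFmul : β ^ 7 * (1 + β) * (β - 1) ^ 2 * F = β ^ 5 * (β + 1) ^ 2 - β ^ 2 - 1 := by
    rw [hF, show (1 : ℤ) - 8 = -7 by norm_num, zpow_neg]
    norm_cast
    field_simp
    ring
  have numerator_ge : β ^ 2 * (β - 1) ^ 2 * (β ^ 2 + 1) ≤ β ^ 5 * (β + 1) ^ 2 - β ^ 2 - 1 := by
    obtain ⟨x, hx, rfl⟩ : ∃ x, 0 < x ∧ β = x + 1 := ⟨β - 1, hβ1, by ring⟩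
    rw [← sub_nonneg]
    ring_nf
    positivity
  have F_nonneg : 0 ≤ F := by
    have hpos : 0 < β ^ 7 * (1 + β) * (β - 1) ^ 2 := by positivity
    exact nonneg_of_mul_nonneg_right (hFmul ▸ le_trans (by positivity) numerator_ge) hpos
  have F_le : F ≤ 3 - β := by linarith [le_mul_of_one_le_left F_nonneg hγ]
  have beta_bound : β ^ 2 + 1 ≤ β ^ 5 * (1 + β) * (3 - β) := by
    refine le_of_mul_le_mul_left ?_ (by positivity : 0 < β ^ 2 * (β - 1) ^ 2)
    calc _ ≤ β ^ 7 * (1 + β) * (β - 1) ^ 2 * F := hFmul ▸ numerator_ge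
      _ ≤ β ^ 7 * (1 + β) * (β - 1) ^ 2 * (3 - β) := by gcongr
      _ = _ := by ring
  have geometric_le : 2 * β ^ 2 / (β ^ (8 / 2) * (β - 1)) ≤ F := by
    refine le_of_mul_le_mul_left ?_ (by positivity : 0 < β ^ 7 * (1 + β) * (β - 1) ^ 2)
    calc _ = 2 * β ^ 5 * (1 + β) * (β - 1) := by
          norm_num
          field_simp
      _ ≤ _ := by linarith
  have := mul_le_mul_of_nonneg_left geometric_le (one_pos.le.trans hγ)
  linarith

/-- The factor of `M / m` bounds `∑ i ≥ p, β ^ (1 - ⌊i / 2⌋)`, where the summand accounts for the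
words lost because they end with `t c t`, `|t| = i`. -/
theorem stmt_9_general {A : Type*} [LinearOrder A] [Fintype A] [Nonempty A] {p : ℕ} (hp : 2 ≤ p)
    {α β m M : ℝ} (hm : 0 < m) {C : List A → ℝ} (hub : ∀ v ∈ Lam 1 p, C v ≤ M)
    (hlb : ∀ v ∈ Lam 1 p, C v = 0 ∨ m ≤ C v) (hC : IsExpanding 1 p α C)
    {φ : List A → Option A} (hφ : ∀ v ≠ [], φ v ≠ v.getLast?) (hβ : 1 < β)
    (hα : β + M / m * (2 * β ^ 2 / (β ^ (p / 2) * (β - 1))) ≤ α) (n : ℕ) :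
    β * playableWeight p C φ n ≤ playableWeight p C φ (n + 1) := by
  have hp0 : 0 < p := two_pos.trans_le hp
  have hnn : ∀ v ∈ Lam 1 p, 0 ≤ C v := fun v hv => (hlb v hv).elim Eq.ge hm.le.trans
  have hM : 0 ≤ M / m :=
    div_nonneg ((hnn _ (nil_mem_lam one_pos hp0)).trans (hub _ (nil_mem_lam one_pos hp0))) hm.le
  have : 0 < β - 1 := sub_pos.mpr hβ
  have hα0 : 0 < α := lt_of_lt_of_le (by positivity) hα
  exact mul_le_succ_of_mul_le_add_sum (playableWeight_nonneg φ) hp hβ hM hα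
    (hC.mul_playableWeight_le hα0 hp hm hnn hub hlb hφ) n

end HardGame

/-- With coefficients as in the key lemma for the hard game over `Fin 6` (`p = 8`,
`α = 27195/9091`, `γ = 11699/6806`), for any Ben strategy `φ` (never repeating the last
letter) and any real `β > 1` with
`α - γ·β^(1-p)(β^(3+p/2)+2β^(2+p/2)+β^(1+p/2)-β²-1)/((1+β)(β-1)²) ≥ β`,
the weights satisfy `Ŝ_{n+1} ≥ β·Ŝ_n` for all `n ≥ 1`. -/
theorem stmt_9 (C : List (Fin 6) → ℝ)
    (hnn : ∀ v ∈ Lam 1 8, 0 ≤ C v)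
    (hub : ∀ v ∈ Lam 1 8, C v ≤ 11699)
    (hlb : ∀ v ∈ Lam 1 8, C v = 0 ∨ 6806 ≤ C v)
    (hmin : ∀ v ∈ Lam 1 8, ∀ a : Option (Fin 6), (v = [] ∨ a ≠ v.getLast?) →
      (27195 / 9091 : ℝ) * C v ≤
        ∑ b : Fin 6,
          if ¬ HasSq 1 8 (v ++ a.toList ++ [b]) then
            C (lamOf 1 8 (v ++ a.toList ++ [b]))
          else 0)
    (φ : List (Fin 6) → Option (Fin 6))
    (hφ : ∀ v : List (Fin 6), v ≠ [] → φ v ≠ v.getLast?)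
    (β : ℝ) (hβ : 1 < β)
    (hcond : (27195 / 9091 : ℝ) -
        (11699 / 6806 : ℝ) *
          (β ^ ((1 : ℤ) - 8) * (β ^ (3 + 8 / 2 : ℕ) + 2 * β ^ (2 + 8 / 2 : ℕ) +
              β ^ (1 + 8 / 2 : ℕ) - β ^ 2 - 1) /
            ((1 + β) * (β - 1) ^ 2)) ≥ β) :
    ∀ n : ℕ, 1 ≤ n → ShatH φ C (n + 1) ≥ β * ShatH φ C n := by
  rintro (_ | n) hn
  · exact absurd hn (by norm_num)
  rw [shatH_succ, shatH_succ]
  exact stmt_9_general (by norm_num) (by norm_num) hub hlb hmin hφ hβ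
    (add_mul_div_le_of_le_sub (by norm_num) (by norm_num) hβ hcond) n
end

section
/- Let Λ' = {ε, 0, 01, 0102, 010201, 012, 0120, 01210, 0123, 01230, 012301}. Then for every v ∈ Λ' and every a that is either the empty word ε or a letter of A different from the last letter l(v) of v (any a ∈ A ∪ {ε} when v = ε), the number of letters b ∈ A such that vab contains no square of period at most 4 as a factor and Λ(vab) ∈ Λ' is at least 4. -/
open scoped Classical

/-- The subset `Λ' = {ε, 0, 01, 0102, 010201, 012, 0120, 01210, 0123, 01230, 012301}`
of `Λ` (over `Fin 7`, `p = 4`). -/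
def LamP : Set (List (Fin 7)) :=
  {[], [0], [0, 1], [0, 1, 0, 2], [0, 1, 0, 2, 0, 1], [0, 1, 2], [0, 1, 2, 0],
   [0, 1, 2, 1, 0], [0, 1, 2, 3], [0, 1, 2, 3, 0], [0, 1, 2, 3, 0, 1]}

/-! Two observations turn the claim into a finite check over words of length at most `8`.

* A proper prefix of a square of period `q` is the same as a word with period `q` and fewer than
  `2 * q` letters. This condition is invariant under renaming and does not mention the square, so
  `Λ(w)` is found by reading off the longest suffix of `w` satisfying it, as soon as that suffix is
  a renaming of a word known to lie in `Λ`. Minimality of the square may be ignored for the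
  suffixes that must be excluded.
* Whether one word is a renaming of another depends only on which of their positions carry equal
  letters, so it is decided without enumerating the permutations of the alphabet.
-/

section ExtendingPermutation

variable {A ι : Type*} [Finite A]

theorem exists_perm_forall_apply_eq_iff {f g : ι → A} :
    (∃ π : Equiv.Perm A, ∀ i, π (f i) = g i) ↔ ∀ i j, f i = f j ↔ g i = g j := by
  constructor
  · rintro ⟨π, hπ⟩ i j
    rw [← hπ, ← hπ, π.apply_eq_iff_eq]
  · intro h
    choose i hi using fun x : Set.range f => x.2
    have hgi : Function.Injective (g ∘ i) := fun x y hxy =>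
      Subtype.ext <| by rw [← hi x, ← hi y, h]; exact hxy
    obtain ⟨π, hπ⟩ := Equiv.Perm.exists_extending_pair Subtype.val (g ∘ i)
      Subtype.val_injective hgi
    exact ⟨π, fun j => (hπ ⟨f j, j, rfl⟩).trans ((h _ _).1 (hi _))⟩

theorem exists_perm_map_fst_eq_map_snd_iff {z : List (A × A)} :
    (∃ π : Equiv.Perm A, (z.map Prod.fst).map π = z.map Prod.snd) ↔
      ∀ x ∈ z, ∀ y ∈ z, x.1 = y.1 ↔ x.2 = y.2 := by
  simpa using exists_perm_forall_apply_eq_iff (ι := {x // x ∈ z})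
    (f := fun x => x.1.1) (g := fun x => x.1.2)

theorem exists_perm_map_eq_iff {v s : List A} :
    (∃ π : Equiv.Perm A, v.map π = s) ↔
      v.length = s.length ∧ ∀ x ∈ v.zip s, ∀ y ∈ v.zip s, x.1 = y.1 ↔ x.2 = y.2 := by
  have hlen (h : ∃ π : Equiv.Perm A, v.map π = s) : v.length = s.length := by
    obtain ⟨π, rfl⟩ := h
    exact (List.length_map π).symm
  rw [← and_iff_right_of_imp hlen, and_congr_right_iff]
  intro hl
  rw [← exists_perm_map_fst_eq_map_snd_iff, List.map_fst_zip hl.le, List.map_snd_zip hl.ge]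

end ExtendingPermutation

section Squares

variable {A : Type*} {lo hi : ℕ}

theorem exists_append_self_prefix_iff {q : ℕ} {s : List A} :
    (∃ u : List A, u.length = q ∧ u ++ u <+: s) ↔ q ≤ s.length ∧ s.take q <+: s.drop q := by
  constructor
  · rintro ⟨u, rfl, t, rfl⟩
    simp
  · rintro ⟨hq, hs⟩
    refine ⟨s.take q, List.length_take_of_le hq, ?_⟩
    simpa using (List.prefix_append_right_inj (s.take q)).2 hs

theorem hasSq_iff {w : List A} :
    HasSq lo hi w ↔
      ∃ s ∈ w.tails, ∃ q ≤ hi, lo ≤ q ∧ q ≤ s.length ∧ s.take q <+: s.drop q := by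
  simp only [HasSq, List.infix_iff_prefix_suffix, List.mem_tails,
    ← exists_append_self_prefix_iff]
  grind

theorem infix_tail_or_infix_dropLast {f w : List A} (hf : f <:+: w) (hne : f ≠ w) :
    f <:+: w.tail ∨ f <:+: w.dropLast := by
  obtain ⟨p, t, rfl⟩ := hf
  rcases p with _ | ⟨a, p⟩
  · have ht : t ≠ [] := by rintro rfl; simp at hne
    exact .inr ⟨[], t.dropLast, by simp [List.dropLast_append_of_ne_nil ht]⟩
  · exact .inl ⟨p, t, rfl⟩

theorem MinSq.of_not_hasSq_tail_dropLast {w : List A} (hw : IsSq lo hi w)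
    (h_tail : ¬ HasSq lo hi w.tail) (h_dropLast : ¬ HasSq lo hi w.dropLast) :
    MinSq lo hi w := by
  refine ⟨hw, ?_⟩
  rintro _ hf hne ⟨u, hlo, hhi, rfl⟩
  rcases infix_tail_or_infix_dropLast hf hne with hf | hf
  · exact h_tail ⟨u, hlo, hhi, hf⟩
  · exact h_dropLast ⟨u, hlo, hhi, hf⟩

end Squares

/-- `s` is a proper prefix of a square of period at most `p`, expressed without mentioning the
square: `s` has a period `q ≤ p` and fewer than `2 * q` letters. -/
def IsPartialSq {A : Type*} (p : ℕ) (s : List A) : Prop :=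
  ∃ q ≤ p, s.length < 2 * q ∧ s.HasPeriod q

theorem IsPartialSq.map {A B : Type*} {p : ℕ} {s : List A} (hs : IsPartialSq p s) (f : A → B) :
    IsPartialSq p (s.map f) := by
  obtain ⟨q, hq, hlen, hper⟩ := hs
  refine ⟨q, hq, by simpa using hlen, ?_⟩
  simpa [List.HasPeriod] using List.IsPrefix.map f hper

section Lam

variable {A : Type*} [LinearOrder A] {lo hi : ℕ}

theorem isPartialSq_of_mem_lam {v : List A} (hv : v ∈ Lam lo hi) : IsPartialSq hi v := by
  obtain ⟨-, _, ⟨⟨u, -, hhi, rfl⟩, -⟩, hpre, hne⟩ := hv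
  refine ⟨u.length, hhi, ?_, ?_⟩
  · have hlt := hpre.length_le.lt_of_ne fun hlen => hne (hpre.eq_of_length hlen)
    simpa [two_mul] using hlt
  · have hper : (u ++ u).HasPeriod u.length := by simp [List.HasPeriod]
    exact hper.infix hpre.isInfix

/-- A permutation fixing the letters before position `i` cannot lower `w[i]`, because all smaller
letters are among those fixed. -/
theorem normalized_of_forall_lt_mem_take {w : List A}
    (hw : ∀ i : Fin w.length, ∀ b < w[i], b ∈ w.take i) : Normalized w := by
  intro π hlex
  rcases List.lt_iff_exists.1 hlex with ⟨-, hlen⟩ | ⟨i, _, hi, hfix, hlt⟩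
  · simp at hlen
  simp only [List.getElem_map] at hfix hlt
  obtain ⟨j, hj, hjw⟩ := List.mem_take_iff_getElem.1 (hw ⟨i, hi⟩ _ hlt)
  have hππ : π (π w[i]) = π w[i] := hjw ▸ hfix j (lt_min_iff.1 hj).1
  exact hlt.ne (π.injective hππ)

theorem Normalized.eq_of_map_eq_map {x y : List A} (hx : Normalized x) (hy : Normalized y)
    {π σ : Equiv.Perm A} (h : x.map π = y.map σ) : x = y := by
  have hyx : y.map (π.symm * σ : Equiv.Perm A) = x := by
    simpa using (congrArg (List.map π.symm) h).symm
  have hxy : x.map (σ.symm * π : Equiv.Perm A) = y := by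
    simpa using congrArg (List.map σ.symm) h
  have hlex_xy : ¬ x < y := hyx ▸ hy (π.symm * σ)
  have hlex_yx : ¬ y < x := hxy ▸ hx (σ.symm * π)
  exact le_antisymm (not_lt.1 hlex_yx) (not_lt.1 hlex_xy)

theorem lamOf_eq_of_suffix {v w : List A} {π : Equiv.Perm A} (hv : v ∈ Lam lo hi)
    (hvw : v.map π <:+ w)
    (hmax : ∀ s, s <:+ w → v.length < s.length → ¬ IsPartialSq hi s) :
    lamOf lo hi w = v := by
  have h_le {x : List A} (hx : x ∈ Lam lo hi ∧ ∃ σ : Equiv.Perm A, x.map σ <:+ w) :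
      x.length ≤ v.length := by
    obtain ⟨hxΛ, σ, hxw⟩ := hx
    by_contra! hlt
    exact hmax _ hxw (by simpa using hlt) ((isPartialSq_of_mem_lam hxΛ).map σ)
  have hex : ∃ x : List A, (x ∈ Lam lo hi ∧ ∃ σ : Equiv.Perm A, x.map σ <:+ w) ∧
      ∀ y : List A, (y ∈ Lam lo hi ∧ ∃ σ : Equiv.Perm A, y.map σ <:+ w) →
        y.length ≤ x.length :=
    ⟨v, ⟨hv, π, hvw⟩, fun _ => h_le⟩
  rw [lamOf, dif_pos hex]
  obtain ⟨hx, hx_max⟩ := hex.choose_spec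
  generalize hex.choose = x at hx hx_max ⊢
  have hlen : x.length = v.length := (h_le hx).antisymm (hx_max v ⟨hv, π, hvw⟩)
  obtain ⟨hxΛ, σ, hxw⟩ := hx
  have hmap : x.map σ = v.map π :=
    (List.suffix_of_suffix_length_le hxw hvw (by simp [hlen])).eq_of_length (by simp [hlen])
  exact hxΛ.1.eq_of_map_eq_map hv.1 hmap

end Lam

section LamP

-- These instances are local because global ones would replace the classical decidability in the
-- statement of the theorem.
local instance {A : Type*} [DecidableEq A] (lo hi : ℕ) : DecidablePred (HasSq (A := A) lo hi) :=
  fun _ => decidable_of_iff _ hasSq_iff.symm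

local instance {A : Type*} [DecidableEq A] (p : ℕ) : DecidablePred (IsPartialSq (A := A) p) :=
  fun s => inferInstanceAs (Decidable (∃ q ≤ p, s.length < 2 * q ∧ s <+: s.take q ++ s))

local instance {A : Type*} [Finite A] [DecidableEq A] (v s : List A) :
    Decidable (∃ π : Equiv.Perm A, v.map π = s) :=
  decidable_of_iff _ exists_perm_map_eq_iff.symm

local instance : Fintype LamP := by
  unfold LamP
  infer_instance

/-- Roots of minimal squares which together have all words of `Λ'` as prefixes. -/
def lamPRoots : List (List (Fin 7)) :=
  [[0, 1, 0, 2], [0, 1, 2], [0, 1, 2, 1], [0, 1, 2, 3]]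

theorem minSq_append_self_of_mem_lamPRoots {u : List (Fin 7)} (hu : u ∈ lamPRoots) :
    MinSq 1 4 (u ++ u) := by
  have h_roots : ∀ u ∈ lamPRoots, (1 ≤ u.length ∧ u.length ≤ 4) ∧
      ¬ HasSq 1 4 (u ++ u).tail ∧ ¬ HasSq 1 4 (u ++ u).dropLast := by
    decide +kernel
  obtain ⟨⟨hlo, hhi⟩, h_tail, h_dropLast⟩ := h_roots u hu
  exact .of_not_hasSq_tail_dropLast ⟨u, hlo, hhi, rfl⟩ h_tail h_dropLast

theorem lamP_subset_lam : LamP ⊆ Lam 1 4 := by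
  intro v hv
  have h_growth : ∀ v : LamP, ∀ i : Fin v.1.length, ∀ b < v.1[i], b ∈ v.1.take i := by
    decide +kernel
  have h_square : ∀ v : LamP, ∃ u ∈ lamPRoots, v.1 <+: u ++ u ∧ v.1 ≠ u ++ u := by
    decide +kernel
  obtain ⟨u, hu, hpre, hne⟩ := h_square ⟨v, hv⟩
  exact ⟨normalized_of_forall_lt_mem_take (h_growth ⟨v, hv⟩), u ++ u,
    minSq_append_self_of_mem_lamPRoots hu, hpre, hne⟩

/-- A decidable condition for `Λ(w) ∈ Λ'`: some suffix of `w` is a renaming of a word of `Λ'`, and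
no longer suffix is a proper prefix of a square of period at most `4`, minimal or not. -/
def EndsInLamP (w : List (Fin 7)) : Prop :=
  ∃ s ∈ w.tails, (∃ v : LamP, ∃ π : Equiv.Perm (Fin 7), v.1.map π = s) ∧
    ∀ t ∈ w.tails, s.length < t.length → ¬ IsPartialSq 4 t

theorem EndsInLamP.lamOf_mem_lamP {w : List (Fin 7)} (hw : EndsInLamP w) :
    lamOf 1 4 w ∈ LamP := by
  obtain ⟨_, hs, ⟨v, π, rfl⟩, hmax⟩ := hw
  simp only [List.mem_tails, List.length_map] at hs hmax
  rw [lamOf_eq_of_suffix (lamP_subset_lam v.2) hs hmax]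
  exact v.2

local instance : DecidablePred EndsInLamP := by
  unfold EndsInLamP
  infer_instance

theorem four_le_card_not_hasSq_endsInLamP (v : LamP) (a : Option (Fin 7))
    (ha : v.1 = [] ∨ a ≠ v.1.getLast?) :
    4 ≤ (Finset.univ.filter fun b : Fin 7 =>
      ¬ HasSq 1 4 (v.1 ++ a.toList ++ [b]) ∧ EndsInLamP (v.1 ++ a.toList ++ [b])).card := by
  decide +revert +kernel

end LamP

/-- Over `Fin 7` with `p = 4`: for every `v ∈ Λ'` and every `a` that is either the empty
word or a letter different from the last letter of `v` (any `a` when `v = ε`), there are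
at least `4` letters `b` such that `vab` contains no square of period at most `4` and
`Λ(vab) ∈ Λ'`. -/
theorem stmt_12 :
    ∀ v ∈ LamP, ∀ a : Option (Fin 7), (v = [] ∨ a ≠ v.getLast?) →
      4 ≤ (Finset.univ.filter fun b : Fin 7 =>
          ¬ HasSq 1 4 (v ++ a.toList ++ [b]) ∧
          lamOf 1 4 (v ++ a.toList ++ [b]) ∈ LamP).card := by
  intro v hv a ha
  refine (four_le_card_not_hasSq_endsInLamP ⟨v, hv⟩ a ha).trans (Finset.card_le_card fun b hb => ?_)
  simp only [Finset.mem_filter] at hb ⊢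
  obtain ⟨hb_mem, h_sqfree, h_ends⟩ := hb
  exact ⟨hb_mem, h_sqfree, h_ends.lamOf_mem_lamP⟩
end
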